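/- arXiv:1512.05752 — 2 statements merged into one kernel-verified Lean document; each statement's English description precedes it below -/
import Mathlib

section
/- Let L be a finite-dimensional solvable Leibniz algebra over a field F with φ(L) = 0 which is minimally non-strongly-solvable and is not a Lie algebra, write L = A + H with A the unique minimal ideal (A = Leib(L)) and H a complementing Lie subalgebra, and let C be the companion Lie algebra on the vector space A ⊕ H with product [a+h, b+k] = hb − ka + hk. Then C is a solvable Lie algebra with φ(C) = 0, A is the unique minimal ideal of C, C is not strongly solvable, and every proper subalgebra of C is strongly solvable (so C is minimally non-strongly-solvable). -/
/-!
Basic theory of (left) Leibniz algebras, formalized over an arbitrary field `F`.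
A Leibniz algebra structure on an `F`-vector space `L` is given by a bilinear
multiplication `m : L →ₗ[F] L →ₗ[F] L` satisfying the left Leibniz identity.
-/

open Submodule Module

section LeibnizDefs

variable {F : Type*} [Field F] {L : Type*} [AddCommGroup L] [Module F L]
variable (m : L →ₗ[F] L →ₗ[F] L)

/-- The left Leibniz identity: `a(bc) = (ab)c + b(ac)`. -/
def IsLeibniz : Prop :=
  ∀ a b c : L, m a (m b c) = m (m a b) c + m b (m a c)

/-- The multiplication is antisymmetric, i.e. the algebra is a Lie algebra. -/
def IsLie : Prop := ∀ a b : L, m a b = - m b a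

/-- The product of two subspaces: the span of all products `x·y`, `x ∈ P`, `y ∈ Q`. -/
abbrev mprod (P Q : Submodule F L) : Submodule F L := Submodule.map₂ m P Q

/-- A subalgebra: a subspace closed under multiplication. -/
def IsSubalg (S : Submodule F L) : Prop := ∀ x ∈ S, ∀ y ∈ S, m x y ∈ S

/-- An ideal of `L`: a subspace `I` with `L·I ⊆ I` and `I·L ⊆ I`. -/
def IsIdeal (I : Submodule F L) : Prop :=
  ∀ (x : L), ∀ y ∈ I, m x y ∈ I ∧ m y x ∈ I

/-- An ideal `I` of a subalgebra `S`. -/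
def IsIdealOf (S I : Submodule F L) : Prop :=
  I ≤ S ∧ ∀ x ∈ S, ∀ y ∈ I, m x y ∈ I ∧ m y x ∈ I

/-- A minimal ideal: a nonzero ideal containing no nonzero proper subideal of `L`. -/
def IsMinIdeal (A : Submodule F L) : Prop :=
  IsIdeal m A ∧ A ≠ ⊥ ∧ ∀ J, IsIdeal m J → J ≤ A → J = ⊥ ∨ J = A

/-- The derived series of a subspace: `S^(0) = S`, `S^(n+1) = S^(n)·S^(n)`. -/
def derSeries (S : Submodule F L) : ℕ → Submodule F L
  | 0 => S
  | n + 1 => mprod m (derSeries S n) (derSeries S n)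

/-- A subalgebra is solvable if its derived series reaches `0`. -/
def IsSolvableSub (S : Submodule F L) : Prop := ∃ n, derSeries m S n = ⊥

/-- The Leibniz algebra `L` is solvable. -/
abbrev IsSolvableAlg : Prop := IsSolvableSub m (⊤ : Submodule F L)

/-- The lower central series of a subspace: `N^1 = N`, `N^(k+1) = N·N^k`. -/
def lcSeries (N : Submodule F L) : ℕ → Submodule F L
  | 0 => N
  | k + 1 => mprod m N (lcSeries N k)

/-- A subalgebra is nilpotent if its lower central series reaches `0`. -/
def IsNilpotentSub (N : Submodule F L) : Prop := ∃ k, lcSeries m N k = ⊥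

/-- A subalgebra `S` is strongly solvable if `S² = S·S` is nilpotent. -/
def IsStronglySolvable (S : Submodule F L) : Prop :=
  IsNilpotentSub m (mprod m S S)

/-- A maximal subalgebra: a proper subalgebra not contained in any larger proper
subalgebra. -/
def IsMaxSubalg (S : Submodule F L) : Prop :=
  IsSubalg m S ∧ S ≠ ⊤ ∧ ∀ T, IsSubalg m T → S ≤ T → T = S ∨ T = ⊤

/-- The Frattini subalgebra `F(L)`: the intersection of all maximal subalgebras. -/
def frattiniSub : Submodule F L := sInf {S | IsMaxSubalg m S}

/-- The Frattini ideal `φ(L)`: the largest ideal contained in the Frattini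
subalgebra. -/
def frattiniIdeal : Submodule F L :=
  sSup {I | IsIdeal m I ∧ I ≤ frattiniSub m}

/-- `Leib(L)`: the span of all squares `x·x`. -/
def leibIdeal : Submodule F L := Submodule.span F {z | ∃ x : L, z = m x x}

/-- The subalgebra generated by a set. -/
def genBy (s : Set L) : Submodule F L := sInf {S | IsSubalg m S ∧ s ⊆ S}

/-- A subalgebra is two-generated if it is generated as an algebra by two elements. -/
def TwoGenerated (S : Submodule F L) : Prop := ∃ x y : L, genBy m {x, y} = S

/-- A subalgebra `S` is supersolvable if there is a chain of ideals of `S`,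
`0 = S₀ ⊂ S₁ ⊂ ⋯ ⊂ Sₙ = S`, with `dim Sᵢ = i`. -/
def IsSupersolvable (S : Submodule F L) : Prop :=
  ∃ (n : ℕ) (c : ℕ → Submodule F L), c 0 = ⊥ ∧ c n = S ∧
    (∀ i, i < n → c i ≤ c (i + 1)) ∧
    (∀ i, i ≤ n → IsIdealOf m S (c i)) ∧
    (∀ i, i ≤ n → Module.finrank F (c i) = i)

/-- A subspace `S` is nil on `L` if left multiplication by each of its elements is a
nilpotent operator. -/
def IsNilOn (S : Submodule F L) : Prop :=
  ∀ x ∈ S, IsNilpotent (m x : Module.End F L)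

open scoped TensorProduct in
/-- A subspace `S` is triangulable on `L` if, after extending scalars to the algebraic
closure `K` of `F`, the space `K ⊗ L` admits a basis with respect to which the left
multiplication operators by all elements of `K ⊗ S` are upper triangular matrices.
(Since upper triangular matrices form a `K`-subspace of matrices, it suffices that the
base-changed left multiplication by each `x ∈ S` is upper triangular.) -/
def IsTriangulableOn (S : Submodule F L) : Prop :=
  ∃ (n : ℕ) (b : Basis (Fin n) (AlgebraicClosure F) ((AlgebraicClosure F) ⊗[F] L)),
    ∀ x ∈ S, ∀ i j : Fin n, j < i →
      LinearMap.toMatrix b b (LinearMap.baseChange (AlgebraicClosure F) (m x)) i j = 0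

end LeibnizDefs

/-!
Both algebras on `L = A ⊕ H` are controlled by the projections onto the two summands: since
`A · L = 0`, the companion product is `m' x y = m x y - m y (pA x)`, and conversely
`m x y = m' (pH x) y`. Hence the two derived series agree, and a subspace which is stable under the
projections is strongly solvable for both products or for neither.

An ideal of `C` contained in `A` is an ideal of `L`, and an ideal of `C` meeting `A` trivially
projects onto an ideal of `L` inside `H`. As every nonzero ideal of `L` contains `A`, so does every
nonzero ideal of `C`; this gives the uniqueness of `A`, and it gives `φ(C) = 0` because the
maximal subalgebra `H` does not contain `A`. Finally, a proper subalgebra `S` of `C` either lies in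
the proper subalgebra `S + A`, which is stable under the projections, or is a complement of `A` and
embeds into `H`.
-/

section Algebra

variable {F : Type*} [Field F] {L : Type*} [AddCommGroup L] [Module F L]
  {L₁ : Type*} [AddCommGroup L₁] [Module F L₁]
  {m : L →ₗ[F] L →ₗ[F] L} {m₁ : L₁ →ₗ[F] L₁ →ₗ[F] L₁}
  {A H I J N P Q S T : Submodule F L}

theorem lcSeries_mono (h : P ≤ Q) (k : ℕ) : lcSeries m P k ≤ lcSeries m Q k := by
  induction k with
  | zero => exact h
  | succ k ih => exact map₂_le_map₂ h ih

theorem mprod_lcSeries_le (hm : IsLeibniz m) (N : Submodule F L) (i j : ℕ) :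
    mprod m (lcSeries m N i) (lcSeries m N j) ≤ lcSeries m N (i + j + 1) := by
  induction i generalizing j with
  | zero => rw [Nat.zero_add]; exact le_rfl
  | succ i ih =>
    refine map₂_le.2 fun x hx y hy ↦ ?_
    suffices h : lcSeries m N (i + 1) ≤ (lcSeries m N (i + 1 + j + 1)).comap (m.flip y) from h hx
    refine map₂_le.2 fun a ha b hb ↦ ?_
    have h_assoc : m (m a b) y = m a (m b y) - m b (m a y) := eq_sub_of_add_eq (hm a b y).symm
    have h_left : m a (m b y) ∈ lcSeries m N (i + j + 1 + 1) :=
      apply_mem_map₂ m ha (ih j (apply_mem_map₂ m hb hy))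
    have h_right : m b (m a y) ∈ lcSeries m N (i + (j + 1) + 1) :=
      ih (j + 1) (apply_mem_map₂ m hb (apply_mem_map₂ m ha hy))
    rw [mem_comap, LinearMap.flip_apply, h_assoc, show i + 1 + j + 1 = i + j + 1 + 1 by omega]
    exact sub_mem h_left h_right

theorem map_mprod {φ : L →ₗ[F] L₁} (hφ : ∀ x y, φ (m x y) = m₁ (φ x) (φ y))
    (P Q : Submodule F L) : (mprod m P Q).map φ = mprod m₁ (P.map φ) (Q.map φ) := by
  rw [map_map₂, mprod, map₂_map_map,
    LinearMap.ext₂ (f := m.compr₂ φ) (g := m₁.compl₁₂ φ φ) hφ]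

theorem map_lcSeries {φ : L →ₗ[F] L₁} (hφ : ∀ x y, φ (m x y) = m₁ (φ x) (φ y))
    (N : Submodule F L) (k : ℕ) : (lcSeries m N k).map φ = lcSeries m₁ (N.map φ) k := by
  induction k with
  | zero => rfl
  | succ k ih => rw [lcSeries, lcSeries, map_mprod hφ, ih]

theorem IsSubalg.lcSeries_le (hS : IsSubalg m S) (hN : N ≤ S) (k : ℕ) : lcSeries m N k ≤ S := by
  induction k with
  | zero => exact hN
  | succ k ih => exact map₂_le.2 fun x hx y hy ↦ hS x (hN hx) y (ih hy)

theorem IsStronglySolvable.mono (hT : IsStronglySolvable m T) (h : S ≤ T) :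
    IsStronglySolvable m S :=
  hT.imp fun k hk ↦ le_bot_iff.1 ((lcSeries_mono (map₂_le_map₂ h h) k).trans hk.le)

theorem IsStronglySolvable.of_map {φ : L →ₗ[F] L₁} (hφ : ∀ x y, φ (m x y) = m₁ (φ x) (φ y))
    (hS : IsSubalg m S) (hker : Disjoint S (LinearMap.ker φ))
    (h : IsStronglySolvable m₁ (S.map φ)) : IsStronglySolvable m S := by
  obtain ⟨k, hk⟩ := h
  have h_le : lcSeries m (mprod m S S) k ≤ S := hS.lcSeries_le (map₂_le.2 hS) k
  have h_ker : lcSeries m (mprod m S S) k ≤ LinearMap.ker φ := by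
    rw [LinearMap.le_ker_iff_map, map_lcSeries hφ, map_mprod hφ, hk]
  exact ⟨k, le_bot_iff.1 (hker h_le h_ker)⟩

theorem IsIdeal.inf (hI : IsIdeal m I) (hJ : IsIdeal m J) : IsIdeal m (I ⊓ J) :=
  fun x y hy ↦ ⟨⟨(hI x y hy.1).1, (hJ x y hy.2).1⟩, ⟨(hI x y hy.1).2, (hJ x y hy.2).2⟩⟩

theorem IsSubalg.sup_isIdeal (hS : IsSubalg m S) (hI : IsIdeal m I) : IsSubalg m (S ⊔ I) := by
  intro x hx y hy
  obtain ⟨s, hs, a, ha, rfl⟩ := mem_sup.1 hx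
  obtain ⟨t, ht, b, hb, rfl⟩ := mem_sup.1 hy
  have h_expand : m (s + a) (t + b) = m s t + (m a t + m (s + a) b) := by
    rw [map_add, map_add, LinearMap.add_apply, add_assoc]
  rw [h_expand]
  exact add_mem_sup (hS s hs t ht) (add_mem (hI t a ha).2 (hI (s + a) b hb).1)

theorem exists_isMinIdeal_le [IsArtinian F L] (hI : IsIdeal m I) (hI₀ : I ≠ ⊥) :
    ∃ J ≤ I, IsMinIdeal m J := by
  obtain ⟨J, hJI, hJ⟩ :=
    exists_minimal_le_of_wellFoundedLT (fun K ↦ IsIdeal m K ∧ K ≠ ⊥) I ⟨hI, hI₀⟩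
  refine ⟨J, hJI, hJ.prop.1, hJ.prop.2, fun K hK hKJ ↦ ?_⟩
  exact or_iff_not_imp_left.2 fun hK₀ ↦ hJ.eq_of_le ⟨hK, hK₀⟩ hKJ

theorem le_of_unique_isMinIdeal [IsArtinian F L] (huniq : ∀ J, IsMinIdeal m J → J = A)
    (hI : IsIdeal m I) (hI₀ : I ≠ ⊥) : A ≤ I := by
  obtain ⟨J, hJI, hJ⟩ := exists_isMinIdeal_le hI hI₀
  exact huniq J hJ ▸ hJI

theorem IsMinIdeal.eq_of_forall_le (hA : IsMinIdeal m A) (hmono : ∀ I, IsIdeal m I → I ≠ ⊥ → A ≤ I)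
    (hJ : IsMinIdeal m J) : J = A :=
  ((hJ.2.2 A hA.1 (hmono J hJ.1 hJ.2.1)).resolve_left hA.2.1).symm

theorem frattiniIdeal_eq_bot_of_forall_le (hmono : ∀ I, IsIdeal m I → I ≠ ⊥ → A ≤ I)
    (hH : IsMaxSubalg m H) (hAH : ¬ A ≤ H) : frattiniIdeal m = ⊥ := by
  refine sSup_eq_bot.2 fun I ⟨hI, hIF⟩ ↦ ?_
  by_contra hI₀
  exact hAH ((hmono I hI hI₀).trans (hIF.trans (sInf_le hH)))

theorem IsMinIdeal.disjoint_of_sup_eq_top (hA : IsMinIdeal m A)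
    (hAA : ∀ a ∈ A, ∀ b ∈ A, m a b = 0) (hS : IsSubalg m S) (hSA : S ⊔ A = ⊤) (hS₀ : S ≠ ⊤) :
    Disjoint S A := by
  have h_ideal : IsIdeal m (S ⊓ A) := by
    rintro x y ⟨hyS, hyA⟩
    obtain ⟨s, hs, a, ha, rfl⟩ := mem_sup.1 (hSA ▸ mem_top : x ∈ S ⊔ A)
    refine ⟨⟨?_, (hA.1 _ y hyA).1⟩, ⟨?_, (hA.1 _ y hyA).2⟩⟩
    · rw [map_add, LinearMap.add_apply, hAA a ha y hyA, add_zero]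
      exact hS s hs y hyS
    · rw [map_add, hAA y hyA a ha, add_zero]
      exact hS y hyS s hs
  refine disjoint_iff.2 ((hA.2.2 _ h_ideal inf_le_right).resolve_right fun h ↦ hS₀ ?_)
  rwa [sup_eq_left.2 (inf_eq_right.1 h)] at hSA

theorem IsMinIdeal.isMaxSubalg_of_isCompl (hA : IsMinIdeal m A)
    (hAA : ∀ a ∈ A, ∀ b ∈ A, m a b = 0) (hH : IsSubalg m H) (hAH : IsCompl A H) :
    IsMaxSubalg m H := by
  refine ⟨hH, fun h ↦ hA.2.1 (eq_bot_of_isCompl_top (h ▸ hAH)), fun T hT hHT ↦ ?_⟩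
  refine or_iff_not_imp_right.2 fun hT₀ ↦ ?_
  have hTA : T ⊔ A = ⊤ := top_le_iff.1 (hAH.symm.sup_eq_top.ge.trans (sup_le_sup_right hHT A))
  have h_disj : Disjoint T A := hA.disjoint_of_sup_eq_top hAA hT hTA hT₀
  exact (eq_of_le_of_inf_le_of_sup_le hHT (h_disj.eq_bot.trans_le bot_le)
    (le_top.trans hAH.symm.sup_eq_top.ge)).symm

theorem mul_eq_zero_of_mem_leibIdeal (hm : IsLeibniz m) {a : L} (ha : a ∈ leibIdeal m) (y : L) :
    m a y = 0 := by
  suffices h : leibIdeal m ≤ LinearMap.ker (m.flip y) from h ha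
  refine span_le.2 ?_
  rintro _ ⟨x, rfl⟩
  exact right_eq_add.1 (hm x x y)

end Algebra

/-- The product `m'` makes `L = A ⊕ H` the companion Lie algebra of the Leibniz algebra `(L, m)`,
where `A` is an ideal with `A · L = 0` (such as `Leib(L)`) and `H` is a Lie subalgebra. -/
structure IsCompanion {F : Type*} [Field F] {L : Type*} [AddCommGroup L] [Module F L]
    (m : L →ₗ[F] L →ₗ[F] L) (A H : Submodule F L) (m' : L →ₗ[F] L →ₗ[F] L) : Prop where
  isLeibniz : IsLeibniz m
  isIdeal : IsIdeal m A
  mul_eq_zero : ∀ a ∈ A, ∀ y, m a y = 0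
  isSubalg : IsSubalg m H
  mul_antisymm : ∀ h ∈ H, ∀ k ∈ H, m h k = - m k h
  isCompl : IsCompl A H
  mul_add_add : ∀ a ∈ A, ∀ h ∈ H, ∀ b ∈ A, ∀ k ∈ H, m' (a + h) (b + k) = m h b - m k a + m h k

namespace IsCompanion

variable {F : Type*} [Field F] {L : Type*} [AddCommGroup L] [Module F L]
  {m m' : L →ₗ[F] L →ₗ[F] L} {A H I N S T : Submodule F L}

/-- The projection of `L = A ⊕ H` onto `A`, as an endomorphism of `L`. -/
noncomputable def projA (hC : IsCompanion m A H m') : L →ₗ[F] L :=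
  A.projection H hC.isCompl

/-- The projection of `L = A ⊕ H` onto `H`, as an endomorphism of `L`. -/
noncomputable def projH (hC : IsCompanion m A H m') : L →ₗ[F] L :=
  H.projection A hC.isCompl.symm

theorem projA_mem (hC : IsCompanion m A H m') (x : L) : hC.projA x ∈ A := projection_apply_mem _ x

theorem projH_mem (hC : IsCompanion m A H m') (x : L) : hC.projH x ∈ H := projection_apply_mem _ x

theorem projA_add_projH (hC : IsCompanion m A H m') (x : L) : hC.projA x + hC.projH x = x :=
  projection_add_projection_eq_self hC.isCompl x

theorem projH_eq_sub (hC : IsCompanion m A H m') (x : L) : hC.projH x = x - hC.projA x :=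
  projection_eq_self_sub_projection hC.isCompl x

theorem projA_apply_of_mem_left (hC : IsCompanion m A H m') {a : L} (ha : a ∈ A) : hC.projA a = a :=
  projection_apply_of_mem_left _ ha

theorem projA_apply_of_mem_right (hC : IsCompanion m A H m') {h : L} (hh : h ∈ H) :
    hC.projA h = 0 :=
  projection_apply_of_mem_right _ hh

theorem ker_projH (hC : IsCompanion m A H m') : LinearMap.ker hC.projH = A := ker_projection _

theorem mul_projH_left (hC : IsCompanion m A H m') (x y : L) : m (hC.projH x) y = m x y := by
  rw [hC.projH_eq_sub, map_sub, LinearMap.sub_apply, hC.mul_eq_zero _ (hC.projA_mem x), sub_zero]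

theorem projA_mul (hC : IsCompanion m A H m') (x y : L) : hC.projA (m x y) = m x (hC.projA y) := by
  have hA : m x (hC.projA y) ∈ A := (hC.isIdeal x _ (hC.projA_mem y)).1
  have hH : m x (hC.projH y) ∈ H := by
    rw [← hC.mul_projH_left]
    exact hC.isSubalg _ (hC.projH_mem x) _ (hC.projH_mem y)
  calc hC.projA (m x y) = hC.projA (m x (hC.projA y) + m x (hC.projH y)) := by
        rw [← map_add, projA_add_projH]
    _ = m x (hC.projA y) := by
        rw [map_add, hC.projA_apply_of_mem_left hA, hC.projA_apply_of_mem_right hH, add_zero]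

theorem projH_mul (hC : IsCompanion m A H m') (x y : L) : hC.projH (m x y) = m x (hC.projH y) := by
  rw [hC.projH_eq_sub, hC.projA_mul, ← map_sub, ← hC.projH_eq_sub]

theorem companion_apply (hC : IsCompanion m A H m') (x y : L) :
    m' x y = m x y - m y (hC.projA x) := by
  have h := hC.mul_add_add _ (hC.projA_mem x) _ (hC.projH_mem x)
    _ (hC.projA_mem y) _ (hC.projH_mem y)
  rw [projA_add_projH, projA_add_projH] at h
  rw [h, hC.mul_projH_left, hC.mul_projH_left, hC.mul_projH_left, sub_add_eq_add_sub, ← map_add,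
    projA_add_projH]

theorem companion_apply_of_mem (hC : IsCompanion m A H m') (x : L) {a : L} (ha : a ∈ A) :
    m' x a = m x a := by
  rw [hC.companion_apply, hC.mul_eq_zero a ha, sub_zero]

theorem companion_eq_zero_of_mem (hC : IsCompanion m A H m') {a b : L} (ha : a ∈ A) (hb : b ∈ A) :
    m' a b = 0 := by
  rw [hC.companion_apply_of_mem a hb, hC.mul_eq_zero a ha]

theorem companion_projH_left (hC : IsCompanion m A H m') (x y : L) : m' (hC.projH x) y = m x y := by
  rw [hC.companion_apply, hC.mul_projH_left, hC.projA_apply_of_mem_right (hC.projH_mem x),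
    map_zero, sub_zero]

theorem projH_companion (hC : IsCompanion m A H m') (x y : L) :
    hC.projH (m' x y) = m' (hC.projH x) (hC.projH y) := by
  have h : hC.projH (hC.projA x) = 0 := by
    rw [← LinearMap.mem_ker, hC.ker_projH]
    exact hC.projA_mem x
  rw [hC.companion_projH_left, hC.companion_apply, map_sub, hC.projH_mul, hC.projH_mul, h,
    map_zero, sub_zero]

theorem companion_isLie (hC : IsCompanion m A H m') : IsLie m' := by
  intro x y
  have h := hC.mul_antisymm _ (hC.projH_mem x) _ (hC.projH_mem y)
  rw [hC.mul_projH_left, hC.mul_projH_left, hC.projH_eq_sub, hC.projH_eq_sub, map_sub, map_sub] at h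
  rw [hC.companion_apply, hC.companion_apply]
  linear_combination (norm := module) h

theorem companion_isLeibniz (hC : IsCompanion m A H m') : IsLeibniz m' := by
  intro x y z
  have h_zero (u v w : L) : m (m u (hC.projA v)) w = 0 :=
    hC.mul_eq_zero _ (hC.isIdeal u _ (hC.projA_mem v)).1 w
  simp only [hC.companion_apply, map_sub, LinearMap.sub_apply, hC.projA_mul,
    hC.projA_apply_of_mem_left (hC.projA_mem _), h_zero]
  linear_combination (norm := module)
    hC.isLeibniz x y z - hC.isLeibniz x z (hC.projA y) + hC.isLeibniz y z (hC.projA x)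

theorem mem_invtSubmodule_of_le (hC : IsCompanion m A H m') (h : A ≤ T) :
    T ∈ End.invtSubmodule hC.projA :=
  fun x _ ↦ h (hC.projA_mem x)

theorem projH_mem_of_mem_invtSubmodule (hC : IsCompanion m A H m')
    (hS : S ∈ End.invtSubmodule hC.projA) {x : L} (hx : x ∈ S) :
    hC.projH x ∈ S := by
  rw [hC.projH_eq_sub]
  exact sub_mem hx (hS hx)

theorem mprod_mem_invtSubmodule (hC : IsCompanion m A H m') (hS : S ∈ End.invtSubmodule hC.projA) :
    mprod m S S ∈ End.invtSubmodule hC.projA := by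
  refine map₂_le.2 fun x hx y hy ↦ ?_
  rw [mem_comap, hC.projA_mul]
  exact apply_mem_map₂ m hx (hS hy)

theorem mprod_eq_of_le (hC : IsCompanion m A H m') (hS : S ∈ End.invtSubmodule hC.projA)
    (hTS : mprod m T S ≤ mprod m S T) : mprod m' S T = mprod m S T := by
  refine le_antisymm (map₂_le.2 fun x hx y hy ↦ ?_) (map₂_le.2 fun x hx y hy ↦ ?_)
  · rw [hC.companion_apply]
    exact sub_mem (apply_mem_map₂ m hx hy) (hTS (apply_mem_map₂ m hy (hS hx)))
  · rw [← hC.companion_projH_left]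
    exact apply_mem_map₂ m' (hC.projH_mem_of_mem_invtSubmodule hS hx) hy

theorem lcSeries_eq (hC : IsCompanion m A H m') (hN : N ∈ End.invtSubmodule hC.projA) (k : ℕ) :
    lcSeries m' N k = lcSeries m N k := by
  induction k with
  | zero => rfl
  | succ k ih =>
    rw [lcSeries, lcSeries, ih]
    exact hC.mprod_eq_of_le hN (mprod_lcSeries_le hC.isLeibniz N k 0)

theorem derSeries_mem_invtSubmodule (hC : IsCompanion m A H m')
    (hS : S ∈ End.invtSubmodule hC.projA) (n : ℕ) :
    derSeries m S n ∈ End.invtSubmodule hC.projA := by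
  induction n with
  | zero => exact hS
  | succ n ih => exact hC.mprod_mem_invtSubmodule ih

theorem derSeries_eq (hC : IsCompanion m A H m') (hS : S ∈ End.invtSubmodule hC.projA) (n : ℕ) :
    derSeries m' S n = derSeries m S n := by
  induction n with
  | zero => rfl
  | succ n ih =>
    rw [derSeries, derSeries, ih]
    exact hC.mprod_eq_of_le (hC.derSeries_mem_invtSubmodule hS n) le_rfl

theorem isSolvableSub_iff (hC : IsCompanion m A H m') (hS : S ∈ End.invtSubmodule hC.projA) :
    IsSolvableSub m' S ↔ IsSolvableSub m S :=
  exists_congr fun n ↦ by rw [hC.derSeries_eq hS]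

theorem isStronglySolvable_iff (hC : IsCompanion m A H m') (hS : S ∈ End.invtSubmodule hC.projA) :
    IsStronglySolvable m' S ↔ IsStronglySolvable m S :=
  exists_congr fun k ↦ by
    rw [hC.mprod_eq_of_le hS le_rfl, hC.lcSeries_eq (hC.mprod_mem_invtSubmodule hS)]

theorem companion_isIdeal (hC : IsCompanion m A H m') : IsIdeal m' A := by
  intro x a ha
  have h : m' x a ∈ A := by
    rw [hC.companion_apply_of_mem x ha]
    exact (hC.isIdeal x a ha).1
  exact ⟨h, hC.companion_isLie a x ▸ neg_mem h⟩

theorem companion_isSubalg (hC : IsCompanion m A H m') : IsSubalg m' H := by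
  intro x hx y hy
  rw [hC.companion_apply, hC.projA_apply_of_mem_right hx, map_zero, sub_zero]
  exact hC.isSubalg x hx y hy

theorem isSubalg_of_le (hC : IsCompanion m A H m') (hT : IsSubalg m' T) (hAT : A ≤ T) :
    IsSubalg m T := by
  intro x hx y hy
  rw [← hC.companion_projH_left]
  exact hT _ (hC.projH_mem_of_mem_invtSubmodule (hC.mem_invtSubmodule_of_le hAT) hx) y hy

theorem isIdeal_of_le (hC : IsCompanion m A H m') (hI : IsIdeal m' I) (hIA : I ≤ A) :
    IsIdeal m I := by
  intro x y hy
  rw [hC.mul_eq_zero y (hIA hy), ← hC.companion_apply_of_mem x (hIA hy)]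
  exact ⟨(hI x y hy).1, zero_mem I⟩

theorem isIdeal_map_projH (hC : IsCompanion m A H m') (hI : IsIdeal m' I) (hIA : Disjoint I A) :
    IsIdeal m (I.map hC.projH) := by
  rintro x _ ⟨b, hb, rfl⟩
  have h_ann : m b (hC.projA x) = 0 := by
    rw [← hC.companion_apply_of_mem b (hC.projA_mem x)]
    exact disjoint_def.1 hIA _ (hI _ b hb).2 (hC.companion_isIdeal b _ (hC.projA_mem x)).1
  have h_left : hC.projH (m' x b) = m x (hC.projH b) := by
    rw [hC.projH_companion, hC.companion_projH_left]
  have h_right : hC.projH (m' b x) = m (hC.projH b) x :=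
    calc hC.projH (m' b x) = m b (hC.projA x) + m b (hC.projH x) := by
          rw [hC.projH_companion, hC.companion_projH_left, h_ann, zero_add]
      _ = m (hC.projH b) x := by rw [← map_add, projA_add_projH, hC.mul_projH_left]
  exact ⟨⟨_, (hI x b hb).1, h_left⟩, ⟨_, (hI x b hb).2, h_right⟩⟩

theorem companion_isMinIdeal (hC : IsCompanion m A H m') (hA : IsMinIdeal m A) : IsMinIdeal m' A :=
  ⟨hC.companion_isIdeal, hA.2.1, fun J hJ hJA ↦ hA.2.2 J (hC.isIdeal_of_le hJ hJA) hJA⟩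

theorem not_le (hC : IsCompanion m A H m') (hA : A ≠ ⊥) : ¬ A ≤ H :=
  fun h ↦ hA (hC.isCompl.disjoint.eq_bot_of_le h)

theorem le_of_companion_isIdeal (hC : IsCompanion m A H m') (hA : A ≠ ⊥)
    (hmono : ∀ J, IsIdeal m J → J ≠ ⊥ → A ≤ J) (hI : IsIdeal m' I) (hI₀ : I ≠ ⊥) : A ≤ I := by
  by_cases hIA : Disjoint I A
  · have h_map : I.map hC.projH ≠ ⊥ := by
      rw [ne_eq, ← LinearMap.le_ker_iff_map, hC.ker_projH]
      exact fun h ↦ hI₀ (hIA.eq_bot_of_le h)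
    have h_le : A ≤ I.map hC.projH := hmono _ (hC.isIdeal_map_projH hI hIA) h_map
    exact absurd (h_le.trans (map_le_iff_le_comap.2 fun x _ ↦ hC.projH_mem x)) (hC.not_le hA)
  · have h_ideal : IsIdeal m (I ⊓ A) :=
      hC.isIdeal_of_le (hI.inf hC.companion_isIdeal) inf_le_right
    exact (hmono _ h_ideal (mt disjoint_iff.2 hIA)).trans inf_le_left

theorem companion_isMaxSubalg (hC : IsCompanion m A H m') (hA : IsMinIdeal m A) :
    IsMaxSubalg m' H :=
  (hC.companion_isMinIdeal hA).isMaxSubalg_of_isCompl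
    (fun _ ha _ hb ↦ hC.companion_eq_zero_of_mem ha hb) hC.companion_isSubalg hC.isCompl

theorem isStronglySolvable_of_disjoint (hC : IsCompanion m A H m') (hH : IsStronglySolvable m H)
    (hS : IsSubalg m' S) (hSA : Disjoint S A) : IsStronglySolvable m' S := by
  have hH_invt : H ∈ End.invtSubmodule hC.projA := fun x hx ↦ by
    rw [mem_comap, hC.projA_apply_of_mem_right hx]
    exact zero_mem H
  have h_map : S.map hC.projH ≤ H := map_le_iff_le_comap.2 fun x _ ↦ hC.projH_mem x
  exact .of_map hC.projH_companion hS (by rwa [hC.ker_projH])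
    (((hC.isStronglySolvable_iff hH_invt).2 hH).mono h_map)

theorem isStronglySolvable_of_ne_top (hC : IsCompanion m A H m') (hA : IsMinIdeal m A)
    (hproper : ∀ T, IsSubalg m T → T ≠ ⊤ → IsStronglySolvable m T)
    (hS : IsSubalg m' S) (hS₀ : S ≠ ⊤) : IsStronglySolvable m' S := by
  by_cases hSA : S ⊔ A = ⊤
  · have h_disj : Disjoint S A := (hC.companion_isMinIdeal hA).disjoint_of_sup_eq_top
      (fun _ ha _ hb ↦ hC.companion_eq_zero_of_mem ha hb) hS hSA hS₀
    exact hC.isStronglySolvable_of_disjoint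
      (hproper H hC.isSubalg (hC.companion_isMaxSubalg hA).2.1) hS h_disj
  · have h_sub : IsSubalg m (S ⊔ A) :=
      hC.isSubalg_of_le (hS.sup_isIdeal hC.companion_isIdeal) le_sup_right
    have h_invt := hC.mem_invtSubmodule_of_le (le_sup_right : A ≤ S ⊔ A)
    exact ((hC.isStronglySolvable_iff h_invt).2 (hproper _ h_sub hSA)).mono le_sup_left

end IsCompanion

/-- Let `L` be a finite-dimensional solvable Leibniz algebra with
`φ(L) = 0` which is minimally non-strongly-solvable and not a Lie algebra. Write
`L = A + H` with `A` the unique minimal ideal (`A = Leib(L)`) and `H` a complementing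
Lie subalgebra, and let `C` be the companion Lie algebra on the same vector space, with
product `[a+h, b+k] = hb − ka + hk` (given here by the bilinear map `m'`). Then `C` is a
solvable Lie algebra with `φ(C) = 0`, `A` is the unique minimal ideal of `C`, `C` is not
strongly solvable, and every proper subalgebra of `C` is strongly solvable (so `C` is
minimally non-strongly-solvable). -/
theorem companion_of_minimally_non_strongly_solvable
    {F : Type*} [Field F] {L : Type*} [AddCommGroup L] [Module F L]
    [FiniteDimensional F L]
    (m : L →ₗ[F] L →ₗ[F] L) (hm : IsLeibniz m)
    (hsolv : IsSolvableAlg m)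
    (hphi : frattiniIdeal m = ⊥)
    (hnotss : ¬ IsStronglySolvable m (⊤ : Submodule F L))
    (hproper : ∀ S : Submodule F L, IsSubalg m S → S ≠ ⊤ → IsStronglySolvable m S)
    (hnotLie : ¬ IsLie m)
    (A H : Submodule F L)
    (hmin : IsMinIdeal m A) (huniq : ∀ A', IsMinIdeal m A' → A' = A)
    (hleib : A = leibIdeal m)
    (hH : IsSubalg m H) (hHLie : ∀ h ∈ H, ∀ k ∈ H, m h k = - m k h)
    (hdisj : A ⊓ H = ⊥) (hsum : A ⊔ H = ⊤)
    (m' : L →ₗ[F] L →ₗ[F] L)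
    (hm' : ∀ a ∈ A, ∀ h ∈ H, ∀ b ∈ A, ∀ k ∈ H,
      m' (a + h) (b + k) = m h b - m k a + m h k) :
    IsLie m' ∧ IsLeibniz m' ∧ IsSolvableAlg m' ∧
    frattiniIdeal m' = ⊥ ∧
    IsMinIdeal m' A ∧ (∀ A', IsMinIdeal m' A' → A' = A) ∧
    ¬ IsStronglySolvable m' (⊤ : Submodule F L) ∧
    (∀ S : Submodule F L, IsSubalg m' S → S ≠ ⊤ → IsStronglySolvable m' S) := by
  have hC : IsCompanion m A H m' :=
    { isLeibniz := hm
      isIdeal := hmin.1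
      mul_eq_zero := fun _ ha ↦ mul_eq_zero_of_mem_leibIdeal hm (hleib ▸ ha)
      isSubalg := hH
      mul_antisymm := hHLie
      isCompl := .of_eq hdisj hsum
      mul_add_add := hm' }
  have hA' : IsMinIdeal m' A := hC.companion_isMinIdeal hmin
  have hmono (I : Submodule F L) (hI : IsIdeal m' I) (hI₀ : I ≠ ⊥) : A ≤ I :=
    hC.le_of_companion_isIdeal hmin.2.1 (fun _ ↦ le_of_unique_isMinIdeal huniq) hI hI₀
  have h_top : ⊤ ∈ End.invtSubmodule hC.projA := End.invtSubmodule.top_mem _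
  exact ⟨hC.companion_isLie, hC.companion_isLeibniz, (hC.isSolvableSub_iff h_top).2 hsolv,
    frattiniIdeal_eq_bot_of_forall_le hmono (hC.companion_isMaxSubalg hmin) (hC.not_le hmin.2.1),
    hA', fun _ ↦ hA'.eq_of_forall_le hmono,
    mt (hC.isStronglySolvable_iff h_top).1 hnotss,
    fun _ ↦ hC.isStronglySolvable_of_ne_top hmin hproper⟩
end

section
/- Let L be a finite-dimensional solvable Leibniz algebra over a field F that is minimally non-supersolvable (L is not supersolvable but every proper subalgebra of L is supersolvable). Then L is two-generated. -/
/-!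
Basic theory of (left) Leibniz algebras, formalized over an arbitrary field `F`.
A Leibniz algebra structure on an `F`-vector space `L` is given by a bilinear
multiplication `m : L →ₗ[F] L →ₗ[F] L` satisfying the left Leibniz identity.
-/

open Submodule Module

/-!
Passing to a quotient, one may assume that `L` has a minimal ideal `A` with `L / A` supersolvable;
`A` is abelian and, as `L` is not supersolvable, not one-dimensional.

If no two elements generate `L` modulo `A`, then any two lie in a proper subalgebra containing `A`,
which is supersolvable. Hence every element has an eigenvector in `A`, and a product `xy` has no
nonzero eigenvalue on `A`. Climbing the ideals of `L / A` with this information, one finds that `L`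
acts on the irreducible module `A` by scalars, so `A` would be a line. Hence some `x` and `y`
generate `L` modulo `A`.

If no `x + a`, `y + b` with `a, b ∈ A` generate `L`, each such pair generates a complement of `A`.
Differences of the projections onto `A` along these complements are derivations from `L / A` to `A`
with arbitrary values at `x` and `y`, so they form a space of dimension at least `2 dim A`. On the
other hand they vanish on the centralizer `C` of `A`, and are therefore determined by their value
at an element `z ∉ C` with `zL ⊆ C + Fz`, which bounds the dimension by `dim A`.
-/

open Relation

section Subalgebras

variable {F : Type*} [Field F] {L : Type*} [AddCommGroup L] [Module F L]
variable {m : L →ₗ[F] L →ₗ[F] L} {S A : Submodule F L}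

theorem IsLeibniz.mul_mul (hm : IsLeibniz m) (a b c : L) :
    m (m a b) c = m a (m b c) - m b (m a c) :=
  eq_sub_of_add_eq (hm a b c).symm

theorem isIdeal_top : IsIdeal m ⊤ := fun _ _ _ => ⟨mem_top, mem_top⟩

theorem isIdealOf_bot : IsIdealOf m S ⊥ := by
  refine ⟨bot_le, fun x _ y hy => ?_⟩
  rw [(mem_bot F).1 hy]
  simp

theorem IsIdeal.isIdealOf (hA : IsIdeal m A) (hAS : A ≤ S) : IsIdealOf m S A :=
  ⟨hAS, fun x _ => hA x⟩

theorem IsSubalg.sup (hS : IsSubalg m S) (hA : IsIdeal m A) : IsSubalg m (S ⊔ A) := by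
  intro x hx y hy
  obtain ⟨s, hs, a, ha, rfl⟩ := mem_sup.1 hx
  obtain ⟨t, ht, b, hb, rfl⟩ := mem_sup.1 hy
  have hexpand : m (s + a) (t + b) = m s t + (m s b + m a (t + b)) := by
    simp only [map_add, LinearMap.add_apply]
    abel
  rw [hexpand]
  exact add_mem (mem_sup_left (hS s hs t ht))
    (mem_sup_right (add_mem (hA s b hb).1 (hA (t + b) a ha).2))

theorem isSubalg_genBy (m : L →ₗ[F] L →ₗ[F] L) (s : Set L) : IsSubalg m (genBy m s) := by
  intro x hx y hy
  simp only [genBy, mem_sInf] at *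
  exact fun S hS => hS.1 x (hx S hS) y (hy S hS)

theorem subset_genBy (m : L →ₗ[F] L →ₗ[F] L) (s : Set L) : s ⊆ genBy m s :=
  fun _ hx => mem_sInf.2 fun _ hS => hS.2 hx

theorem genBy_le {s : Set L} (hS : IsSubalg m S) (hs : s ⊆ S) : genBy m s ≤ S :=
  sInf_le ⟨hS, hs⟩

theorem left_mem_genBy_pair (m : L →ₗ[F] L →ₗ[F] L) (x y : L) : x ∈ genBy m {x, y} :=
  subset_genBy m _ (Set.mem_insert x {y})

theorem right_mem_genBy_pair (m : L →ₗ[F] L →ₗ[F] L) (x y : L) : y ∈ genBy m {x, y} :=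
  subset_genBy m _ (Set.mem_insert_of_mem x rfl)

theorem genBy_pair_le {x y : L} (hS : IsSubalg m S) (hx : x ∈ S) (hy : y ∈ S) :
    genBy m {x, y} ≤ S :=
  genBy_le hS (Set.pair_subset hx hy)

theorem genBy_pair_le_sup_genBy_add {a b : L} (hA : IsIdeal m A) (ha : a ∈ A) (hb : b ∈ A)
    (x y : L) : genBy m {x, y} ≤ genBy m {x + a, y + b} ⊔ A := by
  refine genBy_pair_le ((isSubalg_genBy m _).sup hA) ?_ ?_
  · exact mem_sup.2 ⟨x + a, left_mem_genBy_pair m _ _, -a, neg_mem ha, add_neg_cancel_right x a⟩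
  · exact mem_sup.2 ⟨y + b, right_mem_genBy_pair m _ _, -b, neg_mem hb, add_neg_cancel_right y b⟩

end Subalgebras

section SupersolvableOver

variable {F : Type*} [Field F] {L : Type*} [AddCommGroup L] [Module F L]

theorem exists_step_of_reflTransGen {α : Type*} {r : α → α → Prop} {P : α → Prop} {a b : α}
    (h : ReflTransGen r a b) (ha : ¬ P a) (hb : P b) : ∃ c d, r c d ∧ ¬ P c ∧ P d := by
  induction h with
  | refl => exact absurd hb ha
  | @tail c d _ hcd ih =>
    by_cases hc : P c
    · exact ih hc
    · exact ⟨c, d, hcd, hc, hb⟩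

theorem exists_sub_smul_mem_of_mem_sup_span_singleton {E : Submodule F L} {u w : L}
    (h : u ∈ E ⊔ span F {w}) : ∃ r : F, u - r • w ∈ E := by
  obtain ⟨e, he, t, ht, rfl⟩ := mem_sup.1 h
  obtain ⟨r, rfl⟩ := mem_span_singleton.1 ht
  exact ⟨r, by rwa [add_sub_cancel_right]⟩

/-- `I ≤ J` are ideals of `S` with `dim J / I ≤ 1`. -/
def IdealStep (m : L →ₗ[F] L →ₗ[F] L) (S I J : Submodule F L) : Prop :=
  IsIdealOf m S I ∧ IsIdealOf m S J ∧ ∃ v, I ⊔ span F {v} = J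

/-- `S` is supersolvable over `I`, i.e. `S / I` is supersolvable: a chain of ideals of `S` with
steps of dimension at most one leads from `I` to `S`. Allowing steps of dimension zero makes the
notion stable under homomorphic images. -/
def SupersolvableOver (m : L →ₗ[F] L →ₗ[F] L) (S I : Submodule F L) : Prop :=
  ReflTransGen (IdealStep m S) I S

variable {m : L →ₗ[F] L →ₗ[F] L} {S I J K D : Submodule F L}

theorem IdealStep.sup_span_singleton_eq (h : IdealStep m S I J) {w : L} (hwJ : w ∈ J)
    (hwI : w ∉ I) : I ⊔ span F {w} = J := by
  obtain ⟨-, -, v, rfl⟩ := h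
  have hle : I ⊔ span F {w} ≤ I ⊔ span F {v} :=
    sup_le le_sup_left ((span_singleton_le_iff_mem w _).2 hwJ)
  refine ((sup_comm _ I ▸ wcovBy_span_singleton_sup v I).eq_or_eq le_sup_left hle).resolve_left ?_
  exact fun heq => hwI (heq ▸ mem_sup_right (mem_span_singleton_self w))

theorem IsSupersolvable.supersolvableOver_bot [FiniteDimensional F L]
    (h : IsSupersolvable m S) : SupersolvableOver m S ⊥ := by
  obtain ⟨n, c, h0, hn, hle, hideal, hdim⟩ := h
  have hstep : ∀ i < n, IdealStep m S (c i) (c (i + 1)) := by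
    intro i hi
    have hdimi := hdim i hi.le
    have hdimi' := hdim (i + 1) hi
    have hlt : c i < c (i + 1) := lt_of_le_of_finrank_lt_finrank (hle i hi) (by omega)
    obtain ⟨v, hv, hvi⟩ := SetLike.exists_of_lt hlt
    have hlt_sup : c i < c i ⊔ span F {v} := by
      rw [sup_comm]
      exact (covBy_span_singleton_sup hvi).lt
    have hfinrank := finrank_lt_finrank_of_lt hlt_sup
    exact ⟨hideal i hi.le, hideal (i + 1) hi, v, eq_of_le_of_finrank_le
      (sup_le hlt.le ((span_singleton_le_iff_mem v _).2 hv)) (by omega)⟩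
  have hreach : ReflTransGen (fun i j => IdealStep m S (c i) (c j)) 0 n :=
    reflTransGen_of_succ_of_le _ (fun i hi => hstep i hi.2) n.zero_le
  rw [SupersolvableOver, ← h0]
  nth_rw 2 [← hn]
  exact hreach.lift c fun _ _ hij => hij

theorem SupersolvableOver.isSupersolvable [FiniteDimensional F L]
    (h : SupersolvableOver m S ⊥) : IsSupersolvable m S := by
  unfold SupersolvableOver at h
  suffices hchain : ∀ J, ReflTransGen (IdealStep m S) ⊥ J →
      ∃ (n : ℕ) (c : ℕ → Submodule F L), c 0 = ⊥ ∧ c n = J ∧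
        (∀ i, i < n → c i ≤ c (i + 1)) ∧ (∀ i, i ≤ n → IsIdealOf m S (c i)) ∧
        (∀ i, i ≤ n → finrank F (c i) = i) from hchain S h
  intro J hJ
  induction hJ with
  | refl =>
    refine ⟨0, fun _ => ⊥, rfl, rfl, by simp, fun _ _ => isIdealOf_bot, fun i hi => ?_⟩
    rw [finrank_bot, Nat.le_zero.1 hi]
  | @tail J J' _ hJJ' ih =>
    obtain ⟨n, c, h0, rfl, hle, hideal, hdim⟩ := ih
    by_cases heq : c n = J'
    · exact ⟨n, c, h0, heq, hle, hideal, hdim⟩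
    obtain ⟨-, hJ', v, rfl⟩ := hJJ'
    have hv : v ∉ c n := fun hv =>
      heq (sup_eq_left.2 ((span_singleton_le_iff_mem v _).2 hv)).symm
    have hfinrank : finrank F (c n ⊔ span F {v} : Submodule F L) = n + 1 := by
      have hlt : c n < c n ⊔ span F {v} :=
        lt_of_le_of_ne le_sup_left heq
      have hupper := finrank_add_le_finrank_add_finrank (c n) (span F {v})
      have hline := finrank_span_singleton (K := F) (fun hv0 => hv (hv0 ▸ zero_mem _) : v ≠ 0)
      have hlower := finrank_lt_finrank_of_lt hlt
      have hn := hdim n le_rfl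
      omega
    refine ⟨n + 1, Function.update c (n + 1) (c n ⊔ span F {v}), by simp [h0], by simp,
      fun i hi => ?_, fun i hi => ?_, fun i hi => ?_⟩
    · rcases Nat.lt_succ_iff_lt_or_eq.1 hi with hi | rfl
      · rw [Function.update_of_ne (by omega), Function.update_of_ne (by omega)]
        exact hle i hi
      · simp
    all_goals
      rcases Nat.le_succ_iff.1 hi with hi | rfl
    · rw [Function.update_of_ne (by omega)]
      exact hideal i hi
    · simpa using hJ'
    · rw [Function.update_of_ne (by omega)]
      exact hdim i hi
    · rw [Function.update_self]
      exact hfinrank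

theorem SupersolvableOver.of_span_singleton {a : L} (hK : IsIdealOf m S (span F {a}))
    (h : SupersolvableOver m S (span F {a})) : SupersolvableOver m S ⊥ :=
  ReflTransGen.head ⟨isIdealOf_bot, hK, a, bot_sup_eq _⟩ h

/-- `E` is the last ideal of the chain with `E ⊓ K ≤ D`. -/
theorem SupersolvableOver.exists_isIdealOf_sup_span_singleton (h : SupersolvableOver m S I)
    (hID : I ≤ D) (hKS : K ≤ S) (hKD : ¬ K ≤ D) :
    ∃ E, ∃ w ∈ K, w ∉ D ∧ E ⊓ K ≤ D ∧ IsIdealOf m S (E ⊔ span F {w}) := by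
  obtain ⟨E, E', hstep, hE, hE'⟩ := exists_step_of_reflTransGen (P := fun E => ¬ E ⊓ K ≤ D) h
    (not_not.2 (inf_le_left.trans hID)) (by rwa [inf_eq_right.2 hKS])
  rw [not_not] at hE
  obtain ⟨w, ⟨hwE', hwK⟩, hwD⟩ := SetLike.not_le_iff_exists.1 hE'
  have hwE : w ∉ E := fun hwE => hwD (hE ⟨hwE, hwK⟩)
  refine ⟨E, w, hwK, hwD, hE, ?_⟩
  rw [hstep.sup_span_singleton_eq hwE' hwE]
  exact hstep.2.1

theorem SupersolvableOver.exists_eigenvector_mod (h : SupersolvableOver m S I) (hID : I ≤ D)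
    (hK : IsIdealOf m S K) (hKD : ¬ K ≤ D) :
    ∃ w ∈ K, w ∉ D ∧
      ∀ x ∈ S, (∃ r : F, m x w - r • w ∈ D) ∧ ∃ r : F, m w x - r • w ∈ D := by
  obtain ⟨E, w, hwK, hwD, hEK, hEw⟩ := h.exists_isIdealOf_sup_span_singleton hID hK.1 hKD
  have hmod : ∀ u ∈ E ⊔ span F {w}, u ∈ K → ∃ r : F, u - r • w ∈ D := by
    intro u hu huK
    obtain ⟨r, hr⟩ := exists_sub_smul_mem_of_mem_sup_span_singleton hu
    exact ⟨r, hEK ⟨hr, sub_mem huK (smul_mem _ r hwK)⟩⟩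
  refine ⟨w, hwK, hwD, fun x hx => ?_⟩
  have hxw := hEw.2 x hx w (mem_sup_right (mem_span_singleton_self w))
  exact ⟨hmod _ hxw.1 (hK.2 x hx w hwK).1, hmod _ hxw.2 (hK.2 x hx w hwK).2⟩

theorem SupersolvableOver.eigenvalue_mul_eq_zero (hm : IsLeibniz m)
    (h : SupersolvableOver m S ⊥) {x y u : L} (hx : x ∈ S) (hy : y ∈ S) (hu : u ∈ S)
    (hu0 : u ≠ 0) {t : F} (ht : m (m x y) u = t • u) : t = 0 := by
  obtain ⟨E, E', hstep, huE, huE'⟩ := exists_step_of_reflTransGen (P := fun E => u ∈ E) h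
    (by rwa [mem_bot]) hu
  have hsup := hstep.sup_span_singleton_eq huE' huE
  obtain ⟨hE, hE', -⟩ := hstep
  have heigen : ∀ s ∈ S, ∃ r : F, m s u - r • u ∈ E := fun s hs =>
    exists_sub_smul_mem_of_mem_sup_span_singleton (hsup ▸ (hE'.2 s hs u huE').1)
  obtain ⟨α, hα⟩ := heigen x hx
  obtain ⟨β, hβ⟩ := heigen y hy
  -- `x` and `y` act on the line `E' / E` by the scalars `α` and `β`, which commute.
  have hcomm : m (m x y) u =
      (m x (m y u - β • u) + β • (m x u - α • u)) -
        (m y (m x u - α • u) + α • (m y u - β • u)) := by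
    rw [hm.mul_mul]
    simp only [map_sub, map_smul, smul_sub, smul_comm α β]
    abel
  have htu : t • u ∈ E := by
    rw [← ht, hcomm]
    exact sub_mem (add_mem (hE.2 x hx _ hβ).1 (smul_mem _ β hα))
      (add_mem (hE.2 y hy _ hα).1 (smul_mem _ α hβ))
  by_contra ht0
  exact huE ((smul_mem_iff _ ht0).1 htu)

end SupersolvableOver

section MinimalIdeals

variable {F : Type*} [Field F] {L : Type*} [AddCommGroup L] [Module F L]
variable {m : L →ₗ[F] L →ₗ[F] L} {A T : Submodule F L}

theorem exists_isMinIdeal [FiniteDimensional F L] [Nontrivial L]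
    (m : L →ₗ[F] L →ₗ[F] L) : ∃ A, IsMinIdeal m A := by
  obtain ⟨A, ⟨hA, hA0⟩, hmin⟩ := exists_minimal_of_wellFoundedLT
    (fun I : Submodule F L => IsIdeal m I ∧ I ≠ ⊥) ⟨⊤, isIdeal_top, top_ne_bot⟩
  refine ⟨A, hA, hA0, fun J hJ hJA => or_iff_not_imp_left.2 fun hJ0 => ?_⟩
  exact le_antisymm hJA (hmin ⟨hJ, hJ0⟩ hJA)

theorem IsMinIdeal.exists_mul_eq_smul (hm : IsLeibniz m) (hA : IsMinIdeal m A) :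
    ∃ c : F, ∀ a ∈ A, ∀ x, m a x = c • m x a := by
  have hker : IsIdeal m (A ⊓ LinearMap.ker m) := by
    rintro x y ⟨hyA, hy⟩
    have hy0 : m y = 0 := hy
    refine ⟨⟨(hA.1 x y hyA).1, LinearMap.ext fun z => ?_⟩, ?_⟩
    · simp [hm.mul_mul, hy0]
    · simp [hy0]
  rcases hA.2.2 _ hker inf_le_left with h | h
  · refine ⟨-1, fun a ha x => ?_⟩
    have hsymm : m a x + m x a ∈ A ⊓ LinearMap.ker m := by
      refine ⟨add_mem (hA.1 x a ha).2 (hA.1 x a ha).1, LinearMap.ext fun z => ?_⟩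
      simp [hm.mul_mul]
    rw [h, mem_bot] at hsymm
    rw [neg_one_smul, eq_neg_of_add_eq_zero_left hsymm]
  · refine ⟨0, fun a ha x => ?_⟩
    have ha0 : m a = 0 := (h.ge ha).2
    rw [ha0, zero_smul, LinearMap.zero_apply]

theorem IsMinIdeal.eq_bot_or_eq_of_left_invariant (hm : IsLeibniz m) (hA : IsMinIdeal m A)
    {U : Submodule F L} (hUA : U ≤ A) (hU : ∀ x, ∀ u ∈ U, m x u ∈ U) : U = ⊥ ∨ U = A := by
  obtain ⟨c, hc⟩ := hA.exists_mul_eq_smul hm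
  refine hA.2.2 U (fun x u hu => ⟨hU x u hu, ?_⟩) hUA
  rw [hc u (hUA hu)]
  exact smul_mem _ c (hU x u hu)

theorem IsMinIdeal.map_eq_zero (hm : IsLeibniz m) (hA : IsMinIdeal m A) {M : Type*}
    [AddCommGroup M] [Module F M] {f : L →ₗ[F] M}
    (hf : ∀ x, ∀ u ∈ A, f u = 0 → f (m x u) = 0) {a : L} (ha : a ∈ A) (ha0 : a ≠ 0)
    (hfa : f a = 0) {u : L} (hu : u ∈ A) : f u = 0 := by
  rcases hA.eq_bot_or_eq_of_left_invariant hm (inf_le_left : A ⊓ LinearMap.ker f ≤ A)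
    fun x u hu => ⟨(hA.1 x u hu.1).1, hf x u hu.1 hu.2⟩ with h | h
  · exact absurd ((mem_bot F).1 (h.le ⟨ha, hfa⟩)) ha0
  · exact (h.ge hu).2

theorem IsMinIdeal.eq_span_singleton (hm : IsLeibniz m) (hA : IsMinIdeal m A) {a : L}
    (ha : a ∈ A) (ha0 : a ≠ 0) (heigen : ∀ x, ∃ r : F, m x a = r • a) : A = span F {a} := by
  have hinv : ∀ x, ∀ u ∈ span F {a}, m x u ∈ span F {a} := by
    intro x u hu
    obtain ⟨s, rfl⟩ := mem_span_singleton.1 hu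
    obtain ⟨r, hr⟩ := heigen x
    rw [map_smul, hr]
    exact smul_mem _ s (smul_mem _ r (mem_span_singleton_self a))
  rcases hA.eq_bot_or_eq_of_left_invariant hm ((span_singleton_le_iff_mem a A).2 ha) hinv with h | h
  · exact absurd (span_singleton_eq_bot.1 h) ha0
  · exact h.symm

theorem IsIdeal.mprod_self (hm : IsLeibniz m) (hA : IsIdeal m A) : IsIdeal m (mprod m A A) := by
  intro x y hy
  have hleft : mprod m A A ≤ (mprod m A A).comap (m x) := map₂_le.2 fun a ha b hb => by
    rw [mem_comap, hm]
    exact add_mem (apply_mem_map₂ m (hA x a ha).1 hb) (apply_mem_map₂ m ha (hA x b hb).1)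
  have hright : mprod m A A ≤ (mprod m A A).comap (m.flip x) := map₂_le.2 fun a ha b hb => by
    rw [mem_comap, LinearMap.flip_apply, hm.mul_mul]
    exact sub_mem (apply_mem_map₂ m ha (hA x b hb).2) (apply_mem_map₂ m hb (hA x a ha).2)
  exact ⟨hleft hy, hright hy⟩

theorem IsMinIdeal.mul_eq_zero (hm : IsLeibniz m) (hsolv : IsSolvableAlg m)
    (hA : IsMinIdeal m A) {a b : L} (ha : a ∈ A) (hb : b ∈ A) : m a b = 0 := by
  have hle : mprod m A A ≤ A := map₂_le.2 fun x _ y hy => (hA.1 x y hy).1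
  rcases hA.2.2 _ (hA.1.mprod_self hm) hle with h | h
  · exact (mem_bot F).1 (h.le (apply_mem_map₂ m ha hb))
  · have hder : ∀ n, A ≤ derSeries m ⊤ n := by
      intro n
      induction n with
      | zero => exact le_top
      | succ n ih => exact h.ge.trans (map₂_le_map₂ ih ih)
    obtain ⟨n, hn⟩ := hsolv
    exact absurd (le_bot_iff.1 (hn ▸ hder n)) hA.2.1

theorem IsMinIdeal.isCompl (hm : IsLeibniz m) (hA : IsMinIdeal m A)
    (habel : ∀ a ∈ A, ∀ b ∈ A, m a b = 0) (hT : IsSubalg m T) (hT1 : T ≠ ⊤)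
    (hAT : A ⊔ T = ⊤) : IsCompl A T := by
  have hinv : ∀ x, ∀ u ∈ A ⊓ T, m x u ∈ A ⊓ T := by
    rintro x u ⟨huA, huT⟩
    refine ⟨(hA.1 x u huA).1, ?_⟩
    obtain ⟨a, ha, t, ht, rfl⟩ := mem_sup.1 (hAT ▸ mem_top : x ∈ A ⊔ T)
    rw [map_add, LinearMap.add_apply, habel a ha u huA, zero_add]
    exact hT t ht u huT
  rcases hA.eq_bot_or_eq_of_left_invariant hm inf_le_left hinv with h | h
  · exact ⟨disjoint_iff.2 h, codisjoint_iff.2 hAT⟩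
  · rw [inf_eq_left] at h
    exact absurd (sup_eq_right.2 h ▸ hAT) hT1

end MinimalIdeals

section HomomorphicImages

variable {F : Type*} [Field F] {L : Type*} [AddCommGroup L] [Module F L]
variable {L' : Type*} [AddCommGroup L'] [Module F L']
variable {m : L →ₗ[F] L →ₗ[F] L} {m' : L' →ₗ[F] L' →ₗ[F] L'} {f : L →ₗ[F] L'}

theorem IsLeibniz.of_surjective (hm : IsLeibniz m) (hf : ∀ x y, f (m x y) = m' (f x) (f y))
    (hsurj : Function.Surjective f) : IsLeibniz m' := by
  intro a b c
  obtain ⟨x, rfl⟩ := hsurj a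
  obtain ⟨y, rfl⟩ := hsurj b
  obtain ⟨z, rfl⟩ := hsurj c
  simp only [← hf, ← map_add]
  rw [hm]

theorem map_derSeries (hf : ∀ x y, f (m x y) = m' (f x) (f y)) (S : Submodule F L) (n : ℕ) :
    (derSeries m S n).map f = derSeries m' (S.map f) n := by
  induction n with
  | zero => rfl
  | succ n ih =>
    have hcomp : m.compr₂ f = m'.compl₁₂ f f := LinearMap.ext₂ hf
    rw [derSeries, derSeries, ← ih, mprod, mprod, map_map₂, map₂_map_map, hcomp]

theorem IsSolvableAlg.of_surjective (hsolv : IsSolvableAlg m)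
    (hf : ∀ x y, f (m x y) = m' (f x) (f y)) (hsurj : Function.Surjective f) :
    IsSolvableAlg m' := by
  obtain ⟨n, hn⟩ := hsolv
  refine ⟨n, ?_⟩
  rw [← LinearMap.range_eq_top.2 hsurj, ← Submodule.map_top, ← map_derSeries hf, hn,
    Submodule.map_bot]

theorem IsSubalg.map {S : Submodule F L} (hS : IsSubalg m S)
    (hf : ∀ x y, f (m x y) = m' (f x) (f y)) : IsSubalg m' (S.map f) := by
  rintro _ ⟨x, hx, rfl⟩ _ ⟨y, hy, rfl⟩
  rw [← hf]
  exact mem_map_of_mem (hS x hx y hy)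

theorem IsSubalg.comap {S : Submodule F L'} (hS : IsSubalg m' S)
    (hf : ∀ x y, f (m x y) = m' (f x) (f y)) : IsSubalg m (S.comap f) := by
  intro x hx y hy
  rw [mem_comap, hf]
  exact hS _ hx _ hy

theorem IsIdealOf.map {S I : Submodule F L} (hI : IsIdealOf m S I)
    (hf : ∀ x y, f (m x y) = m' (f x) (f y)) : IsIdealOf m' (S.map f) (I.map f) := by
  refine ⟨map_mono hI.1, ?_⟩
  rintro _ ⟨x, hx, rfl⟩ _ ⟨y, hy, rfl⟩
  rw [← hf, ← hf]
  exact (hI.2 x hx y hy).imp mem_map_of_mem mem_map_of_mem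

theorem IsIdealOf.comap {S I : Submodule F L'} (hI : IsIdealOf m' S I)
    (hf : ∀ x y, f (m x y) = m' (f x) (f y)) : IsIdealOf m (S.comap f) (I.comap f) := by
  refine ⟨comap_mono hI.1, fun x hx y hy => ?_⟩
  rw [mem_comap, mem_comap, hf, hf]
  exact hI.2 _ hx _ hy

theorem SupersolvableOver.map {S I : Submodule F L} (h : SupersolvableOver m S I)
    (hf : ∀ x y, f (m x y) = m' (f x) (f y)) :
    SupersolvableOver m' (S.map f) (I.map f) := by
  refine ReflTransGen.lift (Submodule.map f) ?_ _ _ h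
  rintro I J ⟨hI, hJ, v, rfl⟩
  refine ⟨hI.map hf, hJ.map hf, f v, ?_⟩
  rw [Submodule.map_sup, map_span, Set.image_singleton]

theorem SupersolvableOver.comap {S I : Submodule F L'} (h : SupersolvableOver m' S I)
    (hf : ∀ x y, f (m x y) = m' (f x) (f y)) (hsurj : Function.Surjective f) :
    SupersolvableOver m (S.comap f) (I.comap f) := by
  refine ReflTransGen.lift (Submodule.comap f) ?_ _ _ h
  rintro I J ⟨hI, hJ, v, rfl⟩
  obtain ⟨v, rfl⟩ := hsurj v
  refine ⟨hI.comap hf, hJ.comap hf, v, ?_⟩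
  have hmap : I ⊔ span F {f v} = (I.comap f ⊔ span F {v}).map f := by
    rw [Submodule.map_sup, map_comap_eq_of_surjective hsurj, map_span, Set.image_singleton]
  rw [hmap, comap_map_eq_self ((LinearMap.ker_le_comap f).trans le_sup_left)]

theorem IsSupersolvable.map [FiniteDimensional F L] [FiniteDimensional F L'] {S : Submodule F L}
    (h : IsSupersolvable m S) (hf : ∀ x y, f (m x y) = m' (f x) (f y)) :
    IsSupersolvable m' (S.map f) := by
  have hmap := h.supersolvableOver_bot.map hf
  rw [Submodule.map_bot] at hmap
  exact hmap.isSupersolvable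

/-- The algebra `L` is minimally non-supersolvable: it is not supersolvable, but all its proper
subalgebras are. -/
def IsMinimallyNonSupersolvable (m : L →ₗ[F] L →ₗ[F] L) : Prop :=
  ¬ IsSupersolvable m ⊤ ∧ ∀ S, IsSubalg m S → S ≠ ⊤ → IsSupersolvable m S

variable [FiniteDimensional F L]

theorem IsMinimallyNonSupersolvable.nontrivial (h : IsMinimallyNonSupersolvable m) :
    Nontrivial L := by
  by_contra hL
  rw [not_nontrivial_iff_subsingleton] at hL
  have hbot : SupersolvableOver m ⊥ ⊥ := ReflTransGen.refl
  exact h.1 (Subsingleton.elim (⊥ : Submodule F L) ⊤ ▸ hbot.isSupersolvable)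

theorem IsMinimallyNonSupersolvable.ne_span_singleton (h : IsMinimallyNonSupersolvable m)
    {A : Submodule F L} (hA : IsIdeal m A) (hss : SupersolvableOver m ⊤ A) (a : L) :
    A ≠ span F {a} := by
  rintro rfl
  exact h.1 (hss.of_span_singleton (hA.isIdealOf le_top)).isSupersolvable

variable [FiniteDimensional F L']

theorem IsMinimallyNonSupersolvable.of_surjective (h : IsMinimallyNonSupersolvable m)
    (hf : ∀ x y, f (m x y) = m' (f x) (f y)) (hsurj : Function.Surjective f)
    (hnot : ¬ IsSupersolvable m' ⊤) : IsMinimallyNonSupersolvable m' := by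
  refine ⟨hnot, fun S hS hS1 => ?_⟩
  rw [← map_comap_eq_of_surjective hsurj S] at hS1 ⊢
  refine (h.2 _ (hS.comap hf) fun htop => hS1 ?_).map hf
  rw [htop, Submodule.map_top, LinearMap.range_eq_top.2 hsurj]

theorem IsMinimallyNonSupersolvable.genBy_pair_eq_top (h : IsMinimallyNonSupersolvable m)
    (hf : ∀ x y, f (m x y) = m' (f x) (f y)) (hnot : ¬ IsSupersolvable m' ⊤) {x y : L}
    (hxy : genBy m' {f x, f y} = ⊤) : genBy m {x, y} = ⊤ := by
  by_contra hne
  have hle : genBy m' {f x, f y} ≤ (genBy m {x, y}).map f :=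
    genBy_pair_le ((isSubalg_genBy m _).map hf) (mem_map_of_mem (left_mem_genBy_pair m x y))
      (mem_map_of_mem (right_mem_genBy_pair m x y))
  rw [hxy, top_le_iff] at hle
  exact hnot (hle ▸ (h.2 _ (isSubalg_genBy m _) hne).map hf)

end HomomorphicImages

section Quotients

variable {F : Type*} [Field F] {L : Type*} [AddCommGroup L] [Module F L]
variable {m : L →ₗ[F] L →ₗ[F] L} {A : Submodule F L}

/-- The multiplication of the quotient algebra `L / A`. -/
def quotMul (m : L →ₗ[F] L →ₗ[F] L) (A : Submodule F L) (hA : IsIdeal m A) :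
    (L ⧸ A) →ₗ[F] (L ⧸ A) →ₗ[F] (L ⧸ A) :=
  A.liftQ (A.mapQLinear A ∘ₗ m.codRestrict (A.compatibleMaps A) fun x y hy => (hA x y hy).1)
    fun y hy => LinearMap.ext fun z => by
      induction z using Submodule.Quotient.induction_on with
      | H x => exact (Submodule.Quotient.mk_eq_zero A).2 (hA x y hy).2

theorem mkQ_mul (hA : IsIdeal m A) (x y : L) :
    A.mkQ (m x y) = quotMul m A hA (A.mkQ x) (A.mkQ y) := rfl

theorem finrank_quotient_lt_of_ne_bot [FiniteDimensional F L] (hA : A ≠ ⊥) :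
    finrank F (L ⧸ A) < finrank F L := by
  have hadd := A.finrank_quotient_add_finrank
  have hpos := one_le_finrank_iff.2 hA
  omega

end Quotients

section GenerationModulo

variable {F : Type*} [Field F] {L : Type*} [AddCommGroup L] [Module F L]

/-- The elements of `L` acting on `A` by a scalar under left multiplication. -/
def scalarsOn (m : L →ₗ[F] L →ₗ[F] L) (A : Submodule F L) : Submodule F L where
  carrier := {x | ∃ t : F, ∀ a ∈ A, m x a = t • a}
  zero_mem' := ⟨0, fun a _ => by simp⟩
  add_mem' := by
    rintro x y ⟨s, hs⟩ ⟨t, ht⟩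
    exact ⟨s + t, fun a ha => by rw [map_add, LinearMap.add_apply, hs a ha, ht a ha, add_smul]⟩
  smul_mem' := by
    rintro r x ⟨t, ht⟩
    exact ⟨r * t, fun a ha => by rw [map_smul, LinearMap.smul_apply, ht a ha, mul_smul]⟩

variable {m : L →ₗ[F] L →ₗ[F] L} {A B : Submodule F L}

theorem IsIdeal.exists_eigenvector_mem (hA : IsIdeal m A) (hA0 : A ≠ ⊥)
    (hAB : A ≤ B) (hB : SupersolvableOver m B ⊥) :
    ∃ a ∈ A, a ≠ 0 ∧ ∀ x ∈ B, ∃ t : F, m x a = t • a := by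
  obtain ⟨a, ha, ha0, heigen⟩ := hB.exists_eigenvector_mod le_rfl (hA.isIdealOf hAB)
    (by rwa [le_bot_iff])
  refine ⟨a, ha, by rwa [mem_bot] at ha0, fun x hx => ?_⟩
  obtain ⟨t, ht⟩ := (heigen x hx).1
  exact ⟨t, sub_eq_zero.1 ((mem_bot F).1 ht)⟩

theorem IsMinIdeal.scalarsOn_eq_top (hm : IsLeibniz m) (hA : IsMinIdeal m A)
    (habel : ∀ a ∈ A, ∀ b ∈ A, m a b = 0) (hss : SupersolvableOver m ⊤ A)
    (hpair : ∀ x y, ∃ B, x ∈ B ∧ y ∈ B ∧ A ≤ B ∧ SupersolvableOver m B ⊥) :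
    scalarsOn m A = ⊤ := by
  by_contra hne
  have hAZ : A ≤ scalarsOn m A := fun a ha => ⟨0, fun b hb => by rw [habel a ha b hb, zero_smul]⟩
  obtain ⟨w, -, hwZ, hw⟩ := hss.exists_eigenvector_mod hAZ (isIdeal_top.isIdealOf le_rfl)
    (by rwa [top_le_iff])
  obtain ⟨B, hwB, -, hAB, hB⟩ := hpair w w
  obtain ⟨a, ha, ha0, heigen⟩ := hA.1.exists_eigenvector_mem hA.2.1 hAB hB
  obtain ⟨t, hwa⟩ := heigen w hwB
  -- `xw` acts on `A` as `μ w + ν`, hence with eigenvalue `0` on the `t`-eigenspace of `w`.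
  have hmul : ∀ x, ∀ u ∈ A, m w u = t • u → m (m x w) u = 0 := by
    intro x u hu hwu
    obtain ⟨B, hxB, hwB, hAB, hB⟩ := hpair x w
    obtain ⟨μ, ν, hν⟩ := (hw x (mem_top)).1
    have haction : m (m x w) u = (μ * t + ν) • u := by
      have h := hν u hu
      rw [map_sub, map_smul, LinearMap.sub_apply, LinearMap.smul_apply, hwu, sub_eq_iff_eq_add] at h
      rw [h, add_smul, mul_smul, add_comm]
    by_cases hu0 : u = 0
    · rw [hu0, map_zero]
    · rw [haction, hB.eigenvalue_mul_eq_zero hm hxB hwB (hAB hu) hu0 haction, zero_smul]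
  refine hwZ ⟨t, fun u hu => sub_eq_zero.1 (hA.map_eq_zero (f := m w - t • LinearMap.id) hm
    (fun x v hv hfv => ?_) ha ha0 (by simp [hwa]) hu)⟩
  have hwv : m w v = t • v := sub_eq_zero.1 hfv
  have hleib := hm x w v
  rw [hmul x v hv hwv, zero_add, hwv, map_smul] at hleib
  exact sub_eq_zero.2 hleib.symm

theorem IsMinIdeal.exists_genBy_pair_sup_eq_top [FiniteDimensional F L] (hm : IsLeibniz m)
    (hA : IsMinIdeal m A) (habel : ∀ a ∈ A, ∀ b ∈ A, m a b = 0) (hline : ∀ a, A ≠ span F {a})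
    (hss : SupersolvableOver m ⊤ A)
    (hproper : ∀ S, IsSubalg m S → S ≠ ⊤ → IsSupersolvable m S) :
    ∃ x y, genBy m {x, y} ⊔ A = ⊤ := by
  by_contra! hne
  have hscalar : scalarsOn m A = ⊤ := hA.scalarsOn_eq_top hm habel hss fun x y =>
    ⟨genBy m {x, y} ⊔ A, mem_sup_left (left_mem_genBy_pair m x y),
      mem_sup_left (right_mem_genBy_pair m x y), le_sup_right,
      (hproper _ ((isSubalg_genBy m _).sup hA.1) (hne x y)).supersolvableOver_bot⟩
  obtain ⟨a, ha, ha0⟩ := exists_mem_ne_zero_of_ne_bot hA.2.1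
  refine hline a (hA.eq_span_singleton hm ha ha0 fun x => ?_)
  obtain ⟨t, ht⟩ : x ∈ scalarsOn m A := hscalar ▸ mem_top
  exact ⟨t, ht a ha⟩

end GenerationModulo

section Derivations

variable {F : Type*} [Field F] {L : Type*} [AddCommGroup L] [Module F L]

/-- The elements of `L` annihilating `A` under left multiplication. -/
def leftCentralizer (m : L →ₗ[F] L →ₗ[F] L) (A : Submodule F L) : Submodule F L where
  carrier := {x | ∀ a ∈ A, m x a = 0}
  zero_mem' := fun a _ => by simp
  add_mem' := fun hx hy a ha => by rw [map_add, LinearMap.add_apply, hx a ha, hy a ha, add_zero]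
  smul_mem' := fun r x hx a ha => by rw [map_smul, LinearMap.smul_apply, hx a ha, smul_zero]

/-- The derivations from `L / A` to `A`, realized as the derivations of `L` that take values in `A`
and vanish on `A`. -/
def quotientDerivations (m : L →ₗ[F] L →ₗ[F] L) (A : Submodule F L) :
    Submodule F (L →ₗ[F] L) where
  carrier := {δ | (∀ x, δ x ∈ A) ∧ (∀ a ∈ A, δ a = 0) ∧
    ∀ x y, δ (m x y) = m (δ x) y + m x (δ y)}
  zero_mem' := by simp
  add_mem' := by
    rintro δ ε ⟨hδA, hδ0, hδ⟩ ⟨hεA, hε0, hε⟩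
    refine ⟨fun x => add_mem (hδA x) (hεA x), fun a ha => ?_, fun x y => ?_⟩
    · rw [LinearMap.add_apply, hδ0 a ha, hε0 a ha, add_zero]
    · simp only [LinearMap.add_apply, map_add, hδ, hε]
      abel
  smul_mem' := by
    rintro r δ ⟨hδA, hδ0, hδ⟩
    refine ⟨fun x => smul_mem _ r (hδA x), fun a ha => ?_, fun x y => ?_⟩
    · rw [LinearMap.smul_apply, hδ0 a ha, smul_zero]
    · simp only [LinearMap.smul_apply, map_smul, hδ, smul_add]

/-- Evaluation of the derivations from `L / A` to `A` at an element of `L`. -/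
def evalDerivation (m : L →ₗ[F] L →ₗ[F] L) (A : Submodule F L) (x : L) :
    quotientDerivations m A →ₗ[F] A :=
  ((LinearMap.applyₗ x).domRestrict (quotientDerivations m A)).codRestrict A fun δ => δ.2.1 x

variable {m : L →ₗ[F] L →ₗ[F] L} {A T T' : Submodule F L} {δ : L →ₗ[F] L}

theorem IsIdeal.isIdeal_leftCentralizer (hm : IsLeibniz m) (hA : IsIdeal m A) :
    IsIdeal m (leftCentralizer m A) := by
  refine fun x y hy => ⟨fun a ha => ?_, fun a ha => ?_⟩
  · rw [hm.mul_mul, hy a ha, map_zero, hy _ (hA x a ha).1, sub_zero]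
  · rw [hm.mul_mul, hy a ha, map_zero, hy _ (hA x a ha).1, sub_zero]

theorem projection_mul (hA : IsIdeal m A) (habel : ∀ a ∈ A, ∀ b ∈ A, m a b = 0)
    (hT : IsSubalg m T) (h : IsCompl A T) (x y : L) :
    A.projection T h (m x y) = m (A.projection T h x) y + m x (A.projection T h y) := by
  obtain ⟨a, ha, s, hs, rfl⟩ := mem_sup.1 (h.sup_eq_top ▸ mem_top : x ∈ A ⊔ T)
  obtain ⟨b, hb, t, ht, rfl⟩ := mem_sup.1 (h.sup_eq_top ▸ mem_top : y ∈ A ⊔ T)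
  simp only [map_add, LinearMap.add_apply, habel a ha b hb, zero_add, add_zero,
    projection_apply_of_mem_left h ha, projection_apply_of_mem_left h hb,
    projection_apply_of_mem_right h hs, projection_apply_of_mem_right h ht,
    projection_apply_of_mem_left h (hA t a ha).2, projection_apply_of_mem_left h (hA s b hb).1,
    projection_apply_of_mem_right h (hT s hs t ht)]
  exact add_comm _ _

theorem projection_sub_projection_mem (hA : IsIdeal m A) (habel : ∀ a ∈ A, ∀ b ∈ A, m a b = 0)
    (hT : IsSubalg m T) (hT' : IsSubalg m T') (h : IsCompl A T) (h' : IsCompl A T') :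
    A.projection T h - A.projection T' h' ∈ quotientDerivations m A := by
  refine ⟨fun x => sub_mem (projection_apply_mem h x) (projection_apply_mem h' x),
    fun a ha => ?_, fun x y => ?_⟩
  · rw [LinearMap.sub_apply, projection_apply_of_mem_left h ha,
      projection_apply_of_mem_left h' ha, sub_self]
  · simp only [LinearMap.sub_apply, map_sub, projection_mul hA habel hT h,
      projection_mul hA habel hT' h']
    abel

theorem projection_sub_projection_apply (h : IsCompl A T) (h' : IsCompl A T') {x a : L}
    (hx : x ∈ T) (ha : a ∈ A) (hxa : x + a ∈ T') :
    (A.projection T h - A.projection T' h') x = a := by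
  have hadd := projection_apply_of_mem_right h' hxa
  rw [map_add, projection_apply_of_mem_left h' ha] at hadd
  rw [LinearMap.sub_apply, projection_apply_of_mem_right h hx, eq_neg_of_add_eq_zero_left hadd,
    zero_sub, neg_neg]

theorem IsMinIdeal.leftCentralizer_ne_top (hm : IsLeibniz m) (hA : IsMinIdeal m A)
    (hline : ∀ a, A ≠ span F {a}) : leftCentralizer m A ≠ ⊤ := by
  intro htop
  obtain ⟨a, ha, ha0⟩ := exists_mem_ne_zero_of_ne_bot hA.2.1
  refine hline a (hA.eq_span_singleton hm ha ha0 fun x => ⟨0, ?_⟩)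
  have hx : x ∈ leftCentralizer m A := htop ▸ mem_top
  rw [hx a ha, zero_smul]

theorem IsMinIdeal.derivation_eq_zero_of_mem_leftCentralizer (hm : IsLeibniz m)
    (hA : IsMinIdeal m A) (hline : ∀ a, A ≠ span F {a}) (hss : SupersolvableOver m ⊤ A)
    (hδ : δ ∈ quotientDerivations m A) {x : L} (hx : x ∈ leftCentralizer m A) : δ x = 0 := by
  suffices hle : leftCentralizer m A ≤ LinearMap.ker δ from hle hx
  by_contra hnot
  obtain ⟨hδA, hδ0, hδ⟩ := hδ
  obtain ⟨w, hw, hδw, heigen⟩ := hss.exists_eigenvector_mod (fun a ha => hδ0 a ha)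
    ((hA.1.isIdeal_leftCentralizer hm).isIdealOf le_top) hnot
  obtain ⟨c, hc⟩ := hA.exists_mul_eq_smul hm
  refine hline (δ w) (hA.eq_span_singleton hm (hδA w) hδw fun s => ?_)
  obtain ⟨r, hr⟩ := (heigen s mem_top).1
  rw [LinearMap.mem_ker, map_sub, map_smul, sub_eq_zero, hδ, hc _ (hδA s), hw _ (hδA s),
    smul_zero, zero_add] at hr
  exact ⟨r, hr⟩

theorem IsMinIdeal.eq_zero_of_mul_eq_zero (hm : IsLeibniz m) (hA : IsMinIdeal m A) {z : L}
    (hz : z ∉ leftCentralizer m A) (hzmul : ∀ s, ∃ r : F, m z s - r • z ∈ leftCentralizer m A)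
    {a : L} (ha : a ∈ A) (hza : m z a = 0) : a = 0 := by
  by_contra ha0
  refine hz fun u hu => hA.map_eq_zero hm (fun s v hv hzv => ?_) ha ha0 hza hu
  obtain ⟨r, hr⟩ := hzmul s
  have hzs := hr v hv
  rw [map_sub, map_smul, LinearMap.sub_apply, LinearMap.smul_apply, hzv, smul_zero, sub_zero] at hzs
  rw [hm, hzs, hzv, map_zero, add_zero]

theorem IsMinIdeal.exists_evalDerivation_injective (hm : IsLeibniz m) (hA : IsMinIdeal m A)
    (habel : ∀ a ∈ A, ∀ b ∈ A, m a b = 0) (hline : ∀ a, A ≠ span F {a})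
    (hss : SupersolvableOver m ⊤ A) : ∃ z, Function.Injective (evalDerivation m A z) := by
  obtain ⟨z, -, hz, hzmul⟩ := hss.exists_eigenvector_mod (D := leftCentralizer m A) habel
    (isIdeal_top.isIdealOf le_rfl) (by simpa using hA.leftCentralizer_ne_top hm hline)
  refine ⟨z, (injective_iff_map_eq_zero _).2 fun ⟨δ, hδ⟩ hδz => ?_⟩
  have hδz : δ z = 0 := congrArg Subtype.val hδz
  refine Subtype.ext (LinearMap.ext fun s => ?_)
  refine hA.eq_zero_of_mul_eq_zero hm hz (fun s => (hzmul s mem_top).2) (hδ.1 s) ?_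
  obtain ⟨r, hr⟩ := (hzmul s mem_top).2
  have hδzs := hA.derivation_eq_zero_of_mem_leftCentralizer hm hline hss hδ hr
  rwa [map_sub, map_smul, hδz, smul_zero, sub_zero, hδ.2.2, hδz, map_zero, LinearMap.zero_apply,
    zero_add] at hδzs

theorem IsMinIdeal.exists_evalDerivation_prod_surjective (hm : IsLeibniz m) (hA : IsMinIdeal m A)
    (habel : ∀ a ∈ A, ∀ b ∈ A, m a b = 0) {x y : L} (hxy : genBy m {x, y} ⊔ A = ⊤)
    (hne : ∀ u v, genBy m {u, v} ≠ ⊤) :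
    Function.Surjective ((evalDerivation m A x).prod (evalDerivation m A y)) := by
  rintro ⟨⟨a, ha⟩, b, hb⟩
  have hcompl : ∀ u v, genBy m {u, v} ⊔ A = ⊤ → IsCompl A (genBy m {u, v}) := fun u v h =>
    hA.isCompl hm habel (isSubalg_genBy m _) (hne u v) (by rwa [sup_comm])
  have h := hcompl x y hxy
  have h' := hcompl (x + a) (y + b) (top_le_iff.1 (hxy ▸ sup_le
    (genBy_pair_le_sup_genBy_add hA.1 ha hb x y) le_sup_right))
  refine ⟨⟨_, projection_sub_projection_mem hA.1 habel (isSubalg_genBy m _) (isSubalg_genBy m _)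
    h h'⟩, Prod.ext (Subtype.ext ?_) (Subtype.ext ?_)⟩
  · exact projection_sub_projection_apply h h' (left_mem_genBy_pair m x y) ha
      (left_mem_genBy_pair m _ _)
  · exact projection_sub_projection_apply h h' (right_mem_genBy_pair m x y) hb
      (right_mem_genBy_pair m _ _)

theorem IsMinIdeal.exists_genBy_pair_eq_top [FiniteDimensional F L] (hm : IsLeibniz m)
    (hA : IsMinIdeal m A) (habel : ∀ a ∈ A, ∀ b ∈ A, m a b = 0) (hline : ∀ a, A ≠ span F {a})
    (hss : SupersolvableOver m ⊤ A)
    (hproper : ∀ S, IsSubalg m S → S ≠ ⊤ → IsSupersolvable m S) :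
    ∃ x y, genBy m {x, y} = ⊤ := by
  by_contra! hne
  obtain ⟨x, y, hxy⟩ := hA.exists_genBy_pair_sup_eq_top hm habel hline hss hproper
  obtain ⟨z, hz⟩ := hA.exists_evalDerivation_injective hm habel hline hss
  have hupper := LinearMap.finrank_le_finrank_of_injective hz
  have hlower := LinearMap.finrank_le_finrank_of_surjective
    (hA.exists_evalDerivation_prod_surjective hm habel hxy hne)
  rw [finrank_prod] at hlower
  have hpos : finrank F A ≠ 0 := fun h => hA.2.1 (finrank_eq_zero.1 h)
  omega

end Derivations

/-- A finite-dimensional solvable Leibniz algebra that is minimally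
non-supersolvable (not supersolvable, but every proper subalgebra is supersolvable) is
two-generated. -/
theorem minimally_non_supersolvable_two_generated
    {F : Type*} [Field F] {L : Type*} [AddCommGroup L] [Module F L]
    [FiniteDimensional F L]
    (m : L →ₗ[F] L →ₗ[F] L) (hm : IsLeibniz m)
    (hsolv : IsSolvableAlg m)
    (hnotsuper : ¬ IsSupersolvable m (⊤ : Submodule F L))
    (hproper : ∀ S : Submodule F L, IsSubalg m S → S ≠ ⊤ → IsSupersolvable m S) :
    ∃ x y : L, genBy m {x, y} = ⊤ := by
  have hmin : IsMinimallyNonSupersolvable m := ⟨hnotsuper, hproper⟩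
  clear hnotsuper hproper
  induction hn : finrank F L using Nat.strong_induction_on generalizing L with
  | _ n ih =>
    have := hmin.nontrivial
    obtain ⟨A, hA⟩ := exists_isMinIdeal m
    have hmul := mkQ_mul hA.1
    have hsurj := A.mkQ_surjective
    by_cases hquot : IsSupersolvable (quotMul m A hA.1) ⊤
    · have hss := hquot.supersolvableOver_bot.comap hmul hsurj
      rw [comap_top, comap_bot, ker_mkQ] at hss
      exact hA.exists_genBy_pair_eq_top hm (fun a ha b hb => hA.mul_eq_zero hm hsolv ha hb)
        (hmin.ne_span_singleton hA.1 hss) hss hmin.2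
    · have hlt : finrank F (L ⧸ A) < n := hn ▸ finrank_quotient_lt_of_ne_bot hA.2.1
      obtain ⟨x, y, hxy⟩ := ih _ hlt (quotMul m A hA.1) (hm.of_surjective hmul hsurj)
        (hsolv.of_surjective hmul hsurj) (hmin.of_surjective hmul hsurj hquot) rfl
      obtain ⟨x, rfl⟩ := hsurj x
      obtain ⟨y, rfl⟩ := hsurj y
      exact ⟨x, y, hmin.genBy_pair_eq_top hmul hquot hxy⟩
end
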